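/- Let u ∈ C_c^∞((0,∞)). Then lim_{|t|→∞} ∫₀^∞ | ∫₀^∞ exp(−kx − i k⁴ t) u(k) dk |² dx = 0. -/

import Mathlib

open Complex MeasureTheory Filter

/-- The Riemann-Lebesgue lemma on the half-line for the phase `k ^ 4 * t`. -/
theorem tendsto_setIntegral_exp_pow_four_cocompact (g : ℝ → ℂ) :
    Tendsto (fun t : ℝ => ∫ k in Set.Ioi (0 : ℝ), Complex.exp (-(I * (k : ℂ) ^ 4 * (t : ℂ))) * g k)
      (cocompact ℝ) (nhds 0) := by
  let h : ℝ → ℂ := (Set.Ioi (0 : ℝ)).indicator fun s =>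
    (|(1 / 4 : ℝ)| * s ^ ((1 / 4 : ℝ) - 1)) • g (s ^ (1 / 4 : ℝ))
  have hscale : Tendsto (fun t : ℝ => t * (2 * Real.pi)⁻¹) (cocompact ℝ) (cocompact ℝ) :=
    (Homeomorph.mulRight₀ (2 * Real.pi)⁻¹
      (inv_ne_zero Real.two_pi_pos.ne')).isClosedEmbedding.tendsto_cocompact
  refine ((Real.tendsto_integral_exp_smul_cocompact h).comp hscale).congr fun t => ?_
  rw [← integral_comp_rpow_Ioi _ (by norm_num : (1 / 4 : ℝ) ≠ 0),
    ← integral_indicator measurableSet_Ioi]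
  refine integral_congr_ae (Eventually.of_forall fun s => ?_)
  by_cases hs : s ∈ Set.Ioi (0 : ℝ)
  · have hroot : ((s ^ (1 / 4 : ℝ) : ℝ) : ℂ) ^ 4 = s := by
      rw [← ofReal_pow, ← Real.rpow_natCast, ← Real.rpow_mul (le_of_lt hs)]
      norm_num
    have hphase : ((2 * Real.pi * -(s * (t * (2 * Real.pi)⁻¹)) : ℝ) : ℂ) * I
        = -(I * (s : ℂ) * (t : ℂ)) := by
      have : 2 * Real.pi * -(s * (t * (2 * Real.pi)⁻¹)) = -(s * t) := by
        field_simp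
      rw [this]
      push_cast
      ring
    simp only [h, Set.indicator_of_mem hs, hroot, Circle.smul_def, Real.fourierChar_apply,
      hphase, smul_eq_mul, Complex.real_smul]
    ring
  · simp [h, Set.indicator_of_notMem hs]

/-- If `u` is supported in `[a, ∞)`, its damped oscillatory transform decays like `exp (-a * x)`. -/
theorem norm_setIntegral_exp_damped_le {u : ℝ → ℂ} (hu : Integrable u) {a : ℝ}
    (ha : ∀ k ∈ tsupport u, a ≤ k) {x : ℝ} (hx : 0 ≤ x) (t : ℝ) :
    ‖∫ k in Set.Ioi (0 : ℝ),
        Complex.exp (-((k * x : ℝ) : ℂ) - I * (k : ℂ) ^ 4 * (t : ℂ)) * u k‖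
      ≤ Real.exp (-a * x) * ∫ k in Set.Ioi (0 : ℝ), ‖u k‖ := by
  rw [← integral_const_mul]
  refine norm_integral_le_of_norm_le (hu.norm.integrableOn.const_mul _)
    (Eventually.of_forall fun k => ?_)
  have hre : (-((k * x : ℝ) : ℂ) - I * (k : ℂ) ^ 4 * (t : ℂ)).re = -(k * x) := by
    simp [← ofReal_pow]
  rw [norm_mul, Complex.norm_exp, hre]
  by_cases hk : k ∈ tsupport u
  · gcongr
    nlinarith [ha k hk]
  · simp [image_eq_zero_of_notMem_tsupport hk]

/-- The damped oscillatory transform of `u` tends to zero in `L²` of the half-line along any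
countably generated filter going to infinity. -/
theorem tendsto_integral_sq_exp_damped {u : ℝ → ℂ} (hu : Continuous u)
    (hsupp : HasCompactSupport u) (hpos : tsupport u ⊆ Set.Ioi (0 : ℝ))
    {l : Filter ℝ} [l.IsCountablyGenerated] (hl : l ≤ cocompact ℝ) :
    Tendsto (fun t : ℝ =>
        ∫ x in Set.Ioi (0 : ℝ),
          ‖∫ k in Set.Ioi (0 : ℝ),
              Complex.exp (-((k * x : ℝ) : ℂ) - I * (k : ℂ) ^ 4 * (t : ℂ)) * u k‖ ^ 2)
      l (nhds 0) := by
  obtain ⟨a, ha0, ha⟩ :=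
    IsCompact.exists_forall_le' hsupp.isCompact continuousOn_id (a := 0) fun k hk => hpos hk
  have hint : Integrable u := hu.integrable_of_hasCompactSupport hsupp
  rw [show nhds (0 : ℝ) = nhds (∫ _ in Set.Ioi (0 : ℝ), (0 : ℝ)) by simp]
  refine tendsto_integral_filter_of_dominated_convergence
    (fun x => (∫ k in Set.Ioi (0 : ℝ), ‖u k‖) ^ 2 * Real.exp (-(2 * a) * x)) ?_ ?_ ?_ ?_
  · refine Eventually.of_forall fun t => StronglyMeasurable.aestronglyMeasurable ?_
    refine (StronglyMeasurable.norm ?_).pow 2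
    refine StronglyMeasurable.integral_prod_right (f := fun x k : ℝ =>
      Complex.exp (-((k * x : ℝ) : ℂ) - I * (k : ℂ) ^ 4 * (t : ℂ)) * u k) ?_
    exact Continuous.stronglyMeasurable (by fun_prop)
  · refine Eventually.of_forall fun t => ?_
    filter_upwards [ae_restrict_mem measurableSet_Ioi] with x hx
    rw [Real.norm_of_nonneg (by positivity)]
    calc _ ≤ (Real.exp (-a * x) * ∫ k in Set.Ioi (0 : ℝ), ‖u k‖) ^ 2 := by
          gcongr
          exact norm_setIntegral_exp_damped_le hint ha (le_of_lt hx) t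
      _ = _ := by
          rw [mul_pow, ← Real.exp_nat_mul, mul_comm]
          congr 2
          push_cast
          ring
  · exact (exp_neg_integrableOn_Ioi 0 (by positivity)).const_mul _
  · refine Eventually.of_forall fun x => ?_
    have h := (tendsto_setIntegral_exp_pow_four_cocompact
      fun k => Complex.exp (-((k * x : ℝ) : ℂ)) * u k).mono_left hl
    have h2 := h.norm.pow 2
    rw [norm_zero, zero_pow two_ne_zero] at h2
    refine h2.congr fun t => ?_
    congr 3
    funext k
    rw [sub_eq_add_neg, Complex.exp_add]
    ring

/-- The contribution of the exponentially decaying mode `e^{-kx}` vanishes in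
`L²(ℝ₊)` as `|t| → ∞`, for `u ∈ C_c^∞((0,∞))`. -/
theorem decaying_mode_dispersion (u : ℝ → ℂ) (hu : ContDiff ℝ (⊤ : ℕ∞) u)
    (hsupp : HasCompactSupport u) (hpos : tsupport u ⊆ Set.Ioi (0 : ℝ)) :
    Tendsto (fun t : ℝ =>
        ∫ x in Set.Ioi (0 : ℝ),
          ‖∫ k in Set.Ioi (0 : ℝ),
              Complex.exp (-((k * x : ℝ) : ℂ) - I * (k : ℂ) ^ 4 * (t : ℂ)) * u k‖ ^ 2)
      atTop (nhds 0) ∧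
    Tendsto (fun t : ℝ =>
        ∫ x in Set.Ioi (0 : ℝ),
          ‖∫ k in Set.Ioi (0 : ℝ),
              Complex.exp (-((k * x : ℝ) : ℂ) - I * (k : ℂ) ^ 4 * (t : ℂ)) * u k‖ ^ 2)
      atBot (nhds 0) := by
  exact ⟨tendsto_integral_sq_exp_damped hu.continuous hsupp hpos atTop_le_cocompact,
    tendsto_integral_sq_exp_damped hu.continuous hsupp hpos atBot_le_cocompact⟩
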